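/- For any initial data A_0, B_0, C_0 > 0, there exists a finite time T_0 > 0 such that the SU(2) negative cross curvature flow ODE system has a positive solution on [0, T_0), which is maximal; moreover, as t → T_0^-, A(t)/(2 sqrt(T_0 - t)) → 1, B(t)/(2 sqrt(T_0 - t)) → 1 and C(t)/(2 sqrt(T_0 - t)) → 1. -/

import Mathlib

/-- The quantity `X = 3A² - (B-C)² - 2AB - 2AC` of the `SU(2)` cross curvature tensor. -/
def su2X (A B C : ℝ) : ℝ := 3 * A ^ 2 - (B - C) ^ 2 - 2 * A * B - 2 * A * C

/-- The quantity `Y = 3B² - (A-C)² - 2AB - 2BC` of the `SU(2)` cross curvature tensor. -/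
def su2Y (A B C : ℝ) : ℝ := 3 * B ^ 2 - (A - C) ^ 2 - 2 * A * B - 2 * B * C

/-- The quantity `Z = 3C² - (A-B)² - 2BC - 2AC` of the `SU(2)` cross curvature tensor. -/
def su2Z (A B C : ℝ) : ℝ := 3 * C ^ 2 - (A - B) ^ 2 - 2 * B * C - 2 * A * C

/-- A triple of functions solves the `SU(2)` negative cross curvature flow ODE system
(with positivity) on a set `s ⊆ ℝ`. -/
def IsSolSU2 (A B C : ℝ → ℝ) (s : Set ℝ) : Prop :=
  ∀ t ∈ s,
    (0 < A t ∧ 0 < B t ∧ 0 < C t) ∧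
    HasDerivAt A
      (-2 * A t * su2Y (A t) (B t) (C t) * su2Z (A t) (B t) (C t) /
        (A t * B t * C t) ^ 2) t ∧
    HasDerivAt B
      (-2 * B t * su2Z (A t) (B t) (C t) * su2X (A t) (B t) (C t) /
        (A t * B t * C t) ^ 2) t ∧
    HasDerivAt C
      (-2 * C t * su2X (A t) (B t) (C t) * su2Y (A t) (B t) (C t) /
        (A t * B t * C t) ^ 2) t

/-- A maximal solution of the `SU(2)` system on `{t | 0 ≤ t, t < T}` (`T ∈ (0,∞]` an
extended real): it is a solution that admits no extension to a strictly larger interval. -/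
def IsMaxSolSU2 (A B C : ℝ → ℝ) (T : EReal) : Prop :=
  IsSolSU2 A B C {t : ℝ | 0 ≤ t ∧ (t : EReal) < T} ∧
  ∀ (A' B' C' : ℝ → ℝ) (T' : EReal), T < T' →
    IsSolSU2 A' B' C' {t : ℝ | 0 ≤ t ∧ (t : EReal) < T'} →
    ¬ (∀ t : ℝ, 0 ≤ t → (t : EReal) < T → A' t = A t ∧ B' t = B t ∧ C' t = C t)

/-!
The flow is invariant under permutations of `A, B, C`. In the time `s` with
`dt = (ABC)² / (A + B + C)⁴ ds` the logarithmic derivatives of `A, B, C` are homogeneous of degree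
zero, hence bounded, so that solutions exist for all `s`. The differences `A - B` and `B - C` solve
linear homogeneous equations, so an initial ordering `A ≥ B ≥ C` persists; it forces `Y ≤ -C²`.
Since `Z - X = 4 (C - A) (A + C - B)`, the ratio `A / C` is then nonincreasing, and this bound on
it makes `A / C - 1` decay exponentially, so that all ratios tend to `1`.

By homogeneity the logarithmic derivatives converge to their value `-2/81` at `(1, 1, 1)`. Hence `A`
decays exponentially, the original time `t` has a finite limit `T` as `s → ∞`, and L'Hôpital's rule
gives `A² / (T - t) → 4`. The solution is maximal because `A → 0` as `t → T`.
-/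

open Asymptotics Filter MeasureTheory Set Topology

section Calculus

theorem exists_isIntegralCurve_of_contDiff_of_norm_le {E : Type*} [NormedAddCommGroup E]
    [NormedSpace ℝ E] [FiniteDimensional ℝ E] {v : E → E} (hv : ContDiff ℝ 1 v) {L : NNReal}
    (hL : ∀ x, ‖v x‖ ≤ L) (x : E) :
    ∃ γ : ℝ → E, γ 0 = x ∧ IsIntegralCurve γ fun _ => v := by
  have := FiniteDimensional.complete ℝ E
  have := FiniteDimensional.proper ℝ E
  -- A solution starting at `y` cannot leave the ball of radius `L` around `y` within unit time.
  have exists_unit_time (y : E) : ∃ γ : ℝ → E, γ 0 = y ∧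
      IsMIntegralCurveOn (I := modelWithCornersSelf ℝ E) γ v (Ioo (-1) 1) := by
    obtain ⟨K, hK⟩ := hv.locallyLipschitz.locallyLipschitzOn.exists_lipschitzOnWith_of_compact
      (isCompact_closedBall y (L : ℝ))
    have picard : IsPicardLindelof (fun _ => v) (tmin := -1) (tmax := 1)
        ⟨0, by norm_num⟩ y L 0 L K :=
      .of_time_independent (fun z _ => hL z) hK (by norm_num)
    obtain ⟨γ, hγ0, hγ⟩ := picard.exists_eq_forall_mem_Icc_hasDerivWithinAt₀
    exact ⟨γ, hγ0, fun t ht => ((hγ t (Ioo_subset_Icc_self ht)).mono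
      Ioo_subset_Icc_self).hasFDerivWithinAt.hasMFDerivWithinAt⟩
  obtain ⟨γ, hγ0, hγ⟩ := exists_isMIntegralCurve_of_isMIntegralCurveOn
    (contMDiff_vectorSpace_iff_contDiff.2 hv) one_pos exists_unit_time x
  refine ⟨γ, hγ0, fun t => ?_⟩
  have hderiv : HasFDerivAt γ ((1 : ℝ →L[ℝ] ℝ).smulRight (v (γ t))) t := (hγ t).hasFDerivAt
  simpa using hderiv.hasDerivAt

theorem eq_mul_exp_integral_of_hasDerivAt {f h : ℝ → ℝ} (hh : Continuous h)
    (hf : ∀ s, HasDerivAt f (h s * f s) s) (a s : ℝ) :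
    f s = f a * Real.exp (∫ x in a..s, h x) := by
  have hd (s : ℝ) : HasDerivAt (fun s => f s * Real.exp (-∫ x in a..s, h x)) 0 s := by
    have hint := (hh.integral_hasStrictDerivAt a s).hasDerivAt
    exact ((hf s).mul hint.neg.exp).congr_deriv (by ring)
  have hconst := is_const_of_deriv_eq_zero (fun s => (hd s).differentiableAt)
    (fun s => (hd s).deriv) s a
  simp only [intervalIntegral.integral_same, neg_zero, Real.exp_zero, mul_one] at hconst
  rw [← hconst, mul_assoc, ← Real.exp_add, neg_add_cancel, Real.exp_zero, mul_one]

theorem isBigO_exp_of_hasDerivAt_le {f f' : ℝ → ℝ} {κ : ℝ}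
    (hf : ∀ᶠ s in atTop, HasDerivAt f (f' s) s) (hf0 : ∀ᶠ s in atTop, 0 ≤ f s)
    (hle : ∀ᶠ s in atTop, f' s ≤ κ * f s) :
    f =O[atTop] fun s => Real.exp (κ * s) := by
  obtain ⟨a, ha⟩ := eventually_atTop.1 (hf.and (hf0.and hle))
  refine IsBigO.of_bound (f a * Real.exp (-(κ * a))) ?_
  filter_upwards [eventually_ge_atTop a] with s hs
  have gronwall : f s ≤ gronwallBound (f a) κ 0 (s - a) :=
    le_gronwallBound_of_liminf_deriv_right_le (b := s)
      (fun x hx => (ha x hx.1).1.continuousAt.continuousWithinAt)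
      (fun x hx _ hr => (ha x hx.1).1.hasDerivWithinAt.liminf_right_slope_le hr) le_rfl
      (fun x hx => by simpa using (ha x hx.1).2.2) s ⟨hs, le_rfl⟩
  rw [gronwallBound_ε0] at gronwall
  rw [Real.norm_of_nonneg (ha s hs).2.1, Real.norm_of_nonneg (Real.exp_pos _).le, mul_assoc,
    ← Real.exp_add]
  exact gronwall.trans_eq (by ring_nf)

theorem lt_of_strictMono_of_tendsto_atTop {α β : Type*} [PartialOrder α] [IsDirectedOrder α]
    [NoMaxOrder α] [TopologicalSpace β] [Preorder β] [OrderClosedTopology β] {f : α → β} {b : β}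
    (hf : StrictMono f) (hb : Tendsto f atTop (𝓝 b)) (a : α) : f a < b := by
  obtain ⟨a', ha⟩ := exists_gt a
  exact (hf ha).trans_le (hf.monotone.ge_of_tendsto hb a')

theorem exists_inverse_of_hasStrictDerivAt_pos {φ φ' : ℝ → ℝ} {T : ℝ}
    (hφ : ∀ s, HasStrictDerivAt φ (φ' s) s) (hφ' : ∀ s, 0 < φ' s)
    (hT : Tendsto φ atTop (𝓝 T)) :
    ∃ g : ℝ → ℝ, Function.LeftInverse g φ ∧ (∀ a, RightInvOn g φ (Ico (φ a) T)) ∧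
      (∀ s, HasDerivAt g (φ' s)⁻¹ (φ s)) ∧ Tendsto g (𝓝[<] T) atTop := by
  have hmono : StrictMono φ := strictMono_of_hasDerivAt_pos (fun s => (hφ s).hasDerivAt) hφ'
  have hcont : Continuous φ :=
    continuous_iff_continuousAt.2 fun s => (hφ s).hasDerivAt.continuousAt
  have hleft : Function.LeftInverse (Function.invFun φ) φ :=
    Function.leftInverse_invFun hmono.injective
  have hsurj (a : ℝ) : Ico (φ a) T ⊆ φ '' Ici a :=
    isPreconnected_Ici.intermediate_value_Ico self_mem_Ici
      (le_principal_iff.2 (Ici_mem_atTop a)) hcont.continuousOn hT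
  refine ⟨Function.invFun φ, hleft, fun a t ht => ?_, fun s => ?_, ?_⟩
  · obtain ⟨s, -, rfl⟩ := hsurj a ht
    rw [hleft s]
  · exact ((hφ s).to_local_left_inverse (hφ' s).ne' (.of_forall hleft)).hasDerivAt
  · refine tendsto_atTop.2 fun a => ?_
    filter_upwards [Ico_mem_nhdsLT (lt_of_strictMono_of_tendsto_atTop hmono hT a)] with t ht
    obtain ⟨s, hs, rfl⟩ := hsurj a ht
    rwa [hleft s]

theorem tendsto_div_mul_sqrt_of_tendsto_sq_div {α : Type*} {l : Filter α} {f u : α → ℝ} {c : ℝ}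
    (hc : 0 < c) (hf : ∀ s, 0 ≤ f s) (h : Tendsto (fun s => f s ^ 2 / u s) l (𝓝 (c ^ 2))) :
    Tendsto (fun s => f s / (c * √(u s))) l (𝓝 1) := by
  have hlim : √(c ^ 2) / c = 1 := by rw [Real.sqrt_sq hc.le, div_self hc.ne']
  refine hlim ▸ (h.sqrt.div_const c).congr fun s => ?_
  rw [Real.sqrt_div (sq_nonneg _), Real.sqrt_sq (hf s), div_div, mul_comm]

theorem tendsto_of_homogeneous_of_isEquivalent {α X : Type*} [TopologicalSpace X] {l : Filter α}
    {G : ℝ → ℝ → ℝ → X} (hG : ContinuousAt (fun p : ℝ × ℝ × ℝ => G p.1 p.2.1 p.2.2) (1, 1, 1))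
    (hhom : ∀ k a b c, 0 < k → G (k * a) (k * b) (k * c) = G a b c) {A B C : α → ℝ}
    (hA : ∀ᶠ s in l, 0 < A s) (hBA : B ~[l] A) (hCA : C ~[l] A) :
    Tendsto (fun s => G (A s) (B s) (C s)) l (𝓝 (G 1 1 1)) := by
  have hA0 : ∀ᶠ s in l, A s ≠ 0 := hA.mono fun s hs => hs.ne'
  have hB := (isEquivalent_iff_tendsto_one hA0).1 hBA
  have hC := (isEquivalent_iff_tendsto_one hA0).1 hCA
  refine (hG.tendsto.comp (tendsto_const_nhds.prodMk_nhds (hB.prodMk_nhds hC))).congr' ?_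
  filter_upwards [hA] with s hs
  simpa [mul_div_cancel₀, hs.ne'] using (hhom (A s) 1 (B s / A s) (C s / A s) hs).symm

end Calculus

theorem forall_triple_of_antitone {α β : Type*} [LinearOrder β] (f : α → β) {P : α → α → α → Prop}
    (hrotate : ∀ {a b c}, P a b c → P b c a) (hswap : ∀ {a b c}, P a b c → P b a c)
    (h : ∀ {a b c}, f b ≤ f a → f c ≤ f b → P a b c) (a b c : α) : P a b c := by
  have of_last_le {a b c : α} (hca : f c ≤ f a) (hcb : f c ≤ f b) : P a b c := by
    rcases le_total (f b) (f a) with hba | hab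
    · exact h hba hcb
    · exact hswap (h hab hca)
  rcases le_total (f c) (f a) with hca | hac <;> rcases le_total (f c) (f b) with hcb | hbc
  · exact of_last_le hca hcb
  · exact hrotate (of_last_le hbc (hbc.trans hca))
  · exact hrotate (hrotate (of_last_le (hac.trans hcb) hac))
  · rcases le_total (f a) (f b) with hab | hba
    · exact hrotate (hrotate (of_last_le hab hac))
    · exact hrotate (of_last_le hbc hba)

section Rates

/-- The logarithmic derivative of the first metric coefficient in the time `s` with
`dt/ds = (ABC)² / (A + B + C)⁴`. The one of the second and third coefficient is obtained by
cyclically permuting the arguments, since `X`, `Y`, `Z` are cyclic permutations of each other. -/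
noncomputable def rescaledRate (a b c : ℝ) : ℝ :=
  -2 * su2Y a b c * su2Z a b c / (a + b + c) ^ 4

/-- The derivative `dt/ds` of the original time with respect to the rescaled one. It makes
`rescaledRate` homogeneous of degree zero, hence bounded. -/
noncomputable def clockRate (a b c : ℝ) : ℝ :=
  (a * b * c) ^ 2 / (a + b + c) ^ 4

/-- The logarithmic derivative of `A / C - 1` in the rescaled time. -/
noncomputable def pinchingRate (a b c : ℝ) : ℝ :=
  8 * su2Y a b c * a * (a + c - b) / (a + b + c) ^ 4

variable {a b c : ℝ}

theorem rescaledRate_right_comm (a b c : ℝ) : rescaledRate a c b = rescaledRate a b c := by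
  simp only [rescaledRate, su2Y, su2Z]
  ring

theorem clockRate_pos (ha : 0 < a) (hb : 0 < b) (hc : 0 < c) : 0 < clockRate a b c := by
  unfold clockRate
  positivity

theorem clockRate_le_sq (ha : 0 < a) (hb : 0 < b) (hc : 0 < c) : clockRate a b c ≤ a ^ 2 := by
  rw [clockRate, div_le_iff₀ (by positivity)]
  have hbc : b * c ≤ (a + b + c) ^ 2 := by nlinarith [mul_pos ha hb, mul_pos ha hc, mul_pos hb hc]
  calc (a * b * c) ^ 2 = a ^ 2 * (b * c) ^ 2 := by ring
    _ ≤ a ^ 2 * ((a + b + c) ^ 2) ^ 2 := by gcongr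
    _ = a ^ 2 * (a + b + c) ^ 4 := by ring

theorem abs_su2Y_le (ha : 0 < a) (hb : 0 < b) (hc : 0 < c) :
    |su2Y a b c| ≤ 3 * (a + b + c) ^ 2 := by
  have hab := mul_pos ha hb
  have hac := mul_pos ha hc
  have hbc := mul_pos hb hc
  rw [su2Y, abs_le]
  constructor <;> nlinarith [sq_nonneg (a - c), sq_nonneg a, sq_nonneg b, sq_nonneg c]

theorem abs_su2Z_le (ha : 0 < a) (hb : 0 < b) (hc : 0 < c) :
    |su2Z a b c| ≤ 3 * (a + b + c) ^ 2 := by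
  have hYZ : su2Z a b c = su2Y b c a := by simp only [su2Y, su2Z]; ring
  have hsum : a + b + c = b + c + a := by ring
  rw [hYZ, hsum]
  exact abs_su2Y_le hb hc ha

theorem abs_rescaledRate_le (ha : 0 < a) (hb : 0 < b) (hc : 0 < c) : |rescaledRate a b c| ≤ 18 := by
  rw [rescaledRate, abs_div, abs_of_pos (by positivity : 0 < (a + b + c) ^ 4),
    div_le_iff₀ (by positivity)]
  calc |-2 * su2Y a b c * su2Z a b c| = 2 * (|su2Y a b c| * |su2Z a b c|) := by
        rw [abs_mul, abs_mul, abs_neg, abs_two, mul_assoc]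
    _ ≤ 2 * (3 * (a + b + c) ^ 2 * (3 * (a + b + c) ^ 2)) := by
        gcongr
        exacts [abs_su2Y_le ha hb hc, abs_su2Z_le ha hb hc]
    _ = 18 * (a + b + c) ^ 4 := by ring

theorem contDiff_rescaledRate_exp {E : Type*} [NormedAddCommGroup E] [NormedSpace ℝ E]
    {n : WithTop ℕ∞} {f g h : E → ℝ} (hf : ContDiff ℝ n f) (hg : ContDiff ℝ n g)
    (hh : ContDiff ℝ n h) :
    ContDiff ℝ n fun x => rescaledRate (Real.exp (f x)) (Real.exp (g x)) (Real.exp (h x)) := by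
  simp only [rescaledRate, su2Y, su2Z]
  exact ContDiff.div (by fun_prop) (by fun_prop) fun x => by positivity

theorem su2Y_le_neg_sq (hcb : c ≤ b) (hba : b ≤ a) (hc : 0 ≤ c) : su2Y a b c ≤ -c ^ 2 := by
  rw [su2Y]
  nlinarith [mul_nonneg (sub_nonneg.2 hba) (by linarith : 0 ≤ a + 3 * b - 2 * c)]

theorem pinchingRate_le (hcb : c ≤ b) (hba : b ≤ a) (hc : 0 < c) :
    pinchingRate a b c ≤ -(8 / 81 * (c / a) ^ 3) := by
  have hb : 0 < b := hc.trans_le hcb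
  have ha : 0 < a := hb.trans_le hba
  have hY : c ^ 2 * c ≤ -su2Y a b c * (a + c - b) :=
    mul_le_mul (le_neg_of_le_neg (su2Y_le_neg_sq hcb hba hc.le)) (by linarith) hc.le
      ((sq_nonneg c).trans (le_neg_of_le_neg (su2Y_le_neg_sq hcb hba hc.le)))
  rw [pinchingRate, div_le_iff₀ (by positivity), neg_mul, le_neg]
  calc 8 / 81 * (c / a) ^ 3 * (a + b + c) ^ 4
      ≤ 8 / 81 * (c / a) ^ 3 * (3 * a) ^ 4 := by gcongr; linarith
    _ = 8 * a * (c ^ 2 * c) := by field_simp; ring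
    _ ≤ 8 * a * (-su2Y a b c * (a + c - b)) := by gcongr
    _ = -(8 * su2Y a b c * a * (a + c - b)) := by ring

end Rates

/-- Positive solutions of the flow in the rescaled time `s`, defined for all `s : ℝ`. -/
structure IsRescaledSol (A B C : ℝ → ℝ) : Prop where
  A_pos : ∀ s, 0 < A s
  B_pos : ∀ s, 0 < B s
  C_pos : ∀ s, 0 < C s
  hasDerivAt_A : ∀ s, HasDerivAt A (A s * rescaledRate (A s) (B s) (C s)) s
  hasDerivAt_B : ∀ s, HasDerivAt B (B s * rescaledRate (B s) (C s) (A s)) s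
  hasDerivAt_C : ∀ s, HasDerivAt C (C s * rescaledRate (C s) (A s) (B s)) s

-- In the coordinates `(log A, log B, log C)` the vector field is smooth and bounded on all of `ℝ³`.
theorem exists_isRescaledSol {A₀ B₀ C₀ : ℝ} (hA₀ : 0 < A₀) (hB₀ : 0 < B₀) (hC₀ : 0 < C₀) :
    ∃ A B C : ℝ → ℝ, A 0 = A₀ ∧ B 0 = B₀ ∧ C 0 = C₀ ∧ IsRescaledSol A B C := by
  let rate (x y z : ℝ) : ℝ := rescaledRate (Real.exp x) (Real.exp y) (Real.exp z)
  let v (p : ℝ × ℝ × ℝ) : ℝ × ℝ × ℝ :=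
    (rate p.1 p.2.1 p.2.2, rate p.2.1 p.2.2 p.1, rate p.2.2 p.1 p.2.1)
  have hv : ContDiff ℝ 1 v := by
    refine .prodMk ?_ (.prodMk ?_ ?_) <;>
      exact contDiff_rescaledRate_exp (by fun_prop) (by fun_prop) (by fun_prop)
  have rate_le (x y z : ℝ) : ‖rate x y z‖ ≤ (18 : NNReal) :=
    abs_rescaledRate_le (Real.exp_pos x) (Real.exp_pos y) (Real.exp_pos z)
  obtain ⟨γ, hγ0, hγ⟩ := exists_isIntegralCurve_of_contDiff_of_norm_le hv
    (fun p => norm_prod_le_iff.2 ⟨rate_le _ _ _, norm_prod_le_iff.2 ⟨rate_le _ _ _, rate_le _ _ _⟩⟩)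
    (Real.log A₀, Real.log B₀, Real.log C₀)
  refine ⟨fun s => Real.exp (γ s).1, fun s => Real.exp (γ s).2.1, fun s => Real.exp (γ s).2.2,
    by simp [hγ0, Real.exp_log hA₀], by simp [hγ0, Real.exp_log hB₀],
    by simp [hγ0, Real.exp_log hC₀], ?_⟩
  exact {
    A_pos := fun s => Real.exp_pos _
    B_pos := fun s => Real.exp_pos _
    C_pos := fun s => Real.exp_pos _
    hasDerivAt_A := fun s => HasDerivAt.exp (f := fun s => (γ s).1) (hγ s).fst
    hasDerivAt_B := fun s => HasDerivAt.exp (f := fun s => (γ s).2.1) (hγ s).snd.fst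
    hasDerivAt_C := fun s => HasDerivAt.exp (f := fun s => (γ s).2.2) (hγ s).snd.snd }

namespace IsRescaledSol

variable {A B C : ℝ → ℝ}

theorem rotate (h : IsRescaledSol A B C) : IsRescaledSol B C A :=
  ⟨h.B_pos, h.C_pos, h.A_pos, h.hasDerivAt_B, h.hasDerivAt_C, h.hasDerivAt_A⟩

theorem swap (h : IsRescaledSol A B C) : IsRescaledSol B A C :=
  ⟨h.B_pos, h.A_pos, h.C_pos,
    fun s => by rw [rescaledRate_right_comm]; exact h.hasDerivAt_B s,
    fun s => by rw [rescaledRate_right_comm]; exact h.hasDerivAt_A s,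
    fun s => by rw [rescaledRate_right_comm]; exact h.hasDerivAt_C s⟩

theorem sum_pow_ne_zero (h : IsRescaledSol A B C) (n : ℕ) (s : ℝ) : (A s + B s + C s) ^ n ≠ 0 :=
  pow_ne_zero n (add_pos (add_pos (h.A_pos s) (h.B_pos s)) (h.C_pos s)).ne'

theorem continuous_A (h : IsRescaledSol A B C) : Continuous A :=
  continuous_iff_continuousAt.2 fun s => (h.hasDerivAt_A s).continuousAt

-- `A - B` solves a linear homogeneous equation, so it keeps its sign.
theorem B_le_A (h : IsRescaledSol A B C) (hBA : B 0 ≤ A 0) (s : ℝ) : B s ≤ A s := by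
  let k (s : ℝ) : ℝ := 2 * su2Z (A s) (B s) (C s) * (6 * A s * B s + A s ^ 2 + B s ^ 2
    - 2 * C s * (A s + B s) + C s ^ 2) / (A s + B s + C s) ^ 4
  have hk : Continuous k := by
    have hA := h.continuous_A
    have hB := h.rotate.continuous_A
    have hC := h.rotate.rotate.continuous_A
    simp only [k, su2Z]
    exact Continuous.div (by fun_prop) (by fun_prop) (h.sum_pow_ne_zero 4)
  have hlinear (s : ℝ) : HasDerivAt (fun s => A s - B s) (k s * (A s - B s)) s := by
    refine ((h.hasDerivAt_A s).sub (h.hasDerivAt_B s)).congr_deriv ?_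
    simp only [k, rescaledRate, su2Y, su2Z]
    ring
  rw [← sub_nonneg, eq_mul_exp_integral_of_hasDerivAt hk hlinear 0 s]
  exact mul_nonneg (sub_nonneg.2 hBA) (Real.exp_pos _).le

theorem C_le_B (h : IsRescaledSol A B C) (hCB : C 0 ≤ B 0) (s : ℝ) : C s ≤ B s :=
  h.rotate.B_le_A hCB s

theorem hasDerivAt_div_sub_one (h : IsRescaledSol A B C) (s : ℝ) :
    HasDerivAt (fun s => A s / C s - 1)
      (pinchingRate (A s) (B s) (C s) * (A s / C s - 1)) s := by
  have hC := (h.C_pos s).ne'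
  have hS := h.sum_pow_ne_zero 4 s
  refine (((h.hasDerivAt_A s).div (h.hasDerivAt_C s) hC).sub_const 1).congr_deriv ?_
  have hS' : C s + A s + B s = A s + B s + C s := by ring
  simp only [pinchingRate, rescaledRate, su2Y, su2Z, hS']
  generalize (A s + B s + C s) ^ 4 = S at hS ⊢
  field_simp
  ring

theorem antitone_div (h : IsRescaledSol A B C) (hBA : B 0 ≤ A 0) (hCB : C 0 ≤ B 0) :
    Antitone fun s => A s / C s := by
  have hanti : Antitone fun s => A s / C s - 1 := by
    refine antitone_of_hasDerivAt_nonpos h.hasDerivAt_div_sub_one fun s => ?_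
    have hA := h.A_pos s
    have hC := h.C_pos s
    have hrate := pinchingRate_le (h.C_le_B hCB s) (h.B_le_A hBA s) hC
    refine mul_nonpos_of_nonpos_of_nonneg (hrate.trans (neg_nonpos.2 (by positivity))) ?_
    exact sub_nonneg.2 ((one_le_div hC).2 ((h.C_le_B hCB s).trans (h.B_le_A hBA s)))
  simpa using hanti.add_const 1

theorem tendsto_div_of_ordered (h : IsRescaledSol A B C) (hBA : B 0 ≤ A 0) (hCB : C 0 ≤ B 0) :
    Tendsto (fun s => A s / C s) atTop (𝓝 1) := by
  have hratio (s : ℝ) : 0 ≤ A s / C s - 1 := sub_nonneg.2 <|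
    (one_le_div (h.C_pos s)).2 ((h.C_le_B hCB s).trans (h.B_le_A hBA s))
  set κ := 8 / 81 * (C 0 / A 0) ^ 3
  have hκ : 0 < κ := mul_pos (by norm_num) (pow_pos (div_pos (h.C_pos 0) (h.A_pos 0)) 3)
  have hrate : ∀ s, 0 ≤ s → pinchingRate (A s) (B s) (C s) ≤ -κ := fun s hs => by
    refine (pinchingRate_le (h.C_le_B hCB s) (h.B_le_A hBA s) (h.C_pos s)).trans ?_
    have hle : C 0 / A 0 ≤ C s / A s := by
      rw [← inv_div (A 0), ← inv_div (A s)]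
      exact inv_anti₀ (div_pos (h.A_pos s) (h.C_pos s)) (h.antitone_div hBA hCB hs)
    have hpos := div_pos (h.C_pos 0) (h.A_pos 0)
    exact neg_le_neg (mul_le_mul_of_nonneg_left (pow_le_pow_left₀ hpos.le hle 3) (by norm_num))
  have hdecay : (fun s => A s / C s - 1) =O[atTop] fun s => Real.exp (-κ * s) :=
    isBigO_exp_of_hasDerivAt_le (.of_forall h.hasDerivAt_div_sub_one) (.of_forall hratio)
      ((eventually_ge_atTop 0).mono fun s hs =>
        mul_le_mul_of_nonneg_right (hrate s hs) (hratio s))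
  have hzero := hdecay.trans_tendsto
    (Real.tendsto_exp_atBot.comp (tendsto_id.const_mul_atTop_of_neg (neg_neg_of_pos hκ)))
  simpa using hzero.add_const 1

theorem isEquivalent_of_ordered (h : IsRescaledSol A B C) (hBA : B 0 ≤ A 0) (hCB : C 0 ≤ B 0) :
    A ~[atTop] B ∧ B ~[atTop] C := by
  have hAC := h.tendsto_div_of_ordered hBA hCB
  have hBC : Tendsto (B / C) atTop (𝓝 1) :=
    tendsto_of_tendsto_of_tendsto_of_le_of_le tendsto_const_nhds hAC
      (fun s => (one_le_div (h.C_pos s)).2 (h.C_le_B hCB s))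
      (fun s => div_le_div_of_nonneg_right (h.B_le_A hBA s) (h.C_pos s).le)
  have hBC := isEquivalent_of_tendsto_one hBC
  exact ⟨(isEquivalent_of_tendsto_one hAC).trans hBC.symm, hBC⟩

theorem isEquivalent (h : IsRescaledSol A B C) : A ~[atTop] B ∧ B ~[atTop] C :=
  forall_triple_of_antitone (fun f : ℝ → ℝ => f 0)
    (P := fun A B C => IsRescaledSol A B C → A ~[atTop] B ∧ B ~[atTop] C)
    (fun ih h => have ⟨hCA, hAB⟩ := ih h.rotate.rotate; ⟨hAB, (hCA.trans hAB).symm⟩)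
    (fun ih h => have ⟨hBA, hAC⟩ := ih h.swap; ⟨hBA.symm, hBA.trans hAC⟩)
    (fun hBA hCB h => h.isEquivalent_of_ordered hBA hCB) A B C h

theorem tendsto_rescaledRate (h : IsRescaledSol A B C) :
    Tendsto (fun s => rescaledRate (A s) (B s) (C s)) atTop (𝓝 (-2 / 81)) := by
  obtain ⟨hAB, hBC⟩ := h.isEquivalent
  have hlim : rescaledRate 1 1 1 = -2 / 81 := by norm_num [rescaledRate, su2Y, su2Z]
  refine hlim ▸ tendsto_of_homogeneous_of_isEquivalent ?_ (fun k a b c hk => ?_)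
    (.of_forall h.A_pos) hAB.symm (hAB.trans hBC).symm
  · simp only [rescaledRate, su2Y, su2Z]
    exact ContinuousAt.div (by fun_prop) (by fun_prop) (by norm_num)
  · calc rescaledRate (k * a) (k * b) (k * c)
        = k ^ 4 * (-2 * su2Y a b c * su2Z a b c) / (k ^ 4 * (a + b + c) ^ 4) := by
          simp only [rescaledRate, su2Y, su2Z]; congr 1 <;> ring
      _ = rescaledRate a b c := mul_div_mul_left _ _ (pow_ne_zero 4 hk.ne')

theorem tendsto_clockRate_div_sq (h : IsRescaledSol A B C) :
    Tendsto (fun s => clockRate (A s) (B s) (C s) / A s ^ 2) atTop (𝓝 (1 / 81)) := by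
  obtain ⟨hAB, hBC⟩ := h.isEquivalent
  have hlim : clockRate 1 1 1 / 1 ^ 2 = 1 / 81 := by norm_num [clockRate]
  refine hlim ▸ tendsto_of_homogeneous_of_isEquivalent (G := fun a b c => clockRate a b c / a ^ 2)
    ?_ (fun k a b c hk => ?_) (.of_forall h.A_pos) hAB.symm (hAB.trans hBC).symm
  · simp only [clockRate]
    exact ContinuousAt.div (ContinuousAt.div (by fun_prop) (by fun_prop) (by norm_num))
      (by fun_prop) (by norm_num)
  · calc clockRate (k * a) (k * b) (k * c) / (k * a) ^ 2
        = k ^ 6 * (a * b * c) ^ 2 / (k ^ 6 * ((a + b + c) ^ 4 * a ^ 2)) := by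
          rw [clockRate, div_div]; congr 1 <;> ring
      _ = clockRate a b c / a ^ 2 := by
          rw [mul_div_mul_left _ _ (pow_ne_zero 6 hk.ne'), clockRate, div_div]

theorem isBigO_exp (h : IsRescaledSol A B C) : A =O[atTop] fun s => Real.exp (-(1 / 81) * s) := by
  refine isBigO_exp_of_hasDerivAt_le (.of_forall h.hasDerivAt_A)
    (.of_forall fun s => (h.A_pos s).le) ?_
  have hlt : (-2 / 81 : ℝ) < -(1 / 81) := by norm_num
  filter_upwards [h.tendsto_rescaledRate.eventually_le_const hlt] with s hs
  rw [mul_comm]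
  exact mul_le_mul_of_nonneg_right hs (h.A_pos s).le

theorem tendsto_zero (h : IsRescaledSol A B C) : Tendsto A atTop (𝓝 0) :=
  h.isBigO_exp.trans_tendsto
    (Real.tendsto_exp_atBot.comp (tendsto_id.const_mul_atTop_of_neg (by norm_num)))

theorem continuous_clockRate (h : IsRescaledSol A B C) :
    Continuous fun s => clockRate (A s) (B s) (C s) := by
  have hA := h.continuous_A
  have hB := h.rotate.continuous_A
  have hC := h.rotate.rotate.continuous_A
  exact Continuous.div (by fun_prop) (by fun_prop) (h.sum_pow_ne_zero 4)

theorem integrableOn_clockRate (h : IsRescaledSol A B C) :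
    IntegrableOn (fun s => clockRate (A s) (B s) (C s)) (Ioi 0) := by
  refine integrable_of_isBigO_exp_neg (b := 2 / 81) (by norm_num)
    h.continuous_clockRate.continuousOn ?_
  have hle : (fun s => clockRate (A s) (B s) (C s)) =O[atTop] fun s => A s ^ 2 :=
    .of_norm_le fun s => by
      rw [Real.norm_of_nonneg (clockRate_pos (h.A_pos s) (h.B_pos s) (h.C_pos s)).le]
      exact clockRate_le_sq (h.A_pos s) (h.B_pos s) (h.C_pos s)
  refine (hle.trans (h.isBigO_exp.pow 2)).congr_right fun s => ?_
  rw [← Real.exp_nat_mul]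
  ring_nf

theorem exists_clock (h : IsRescaledSol A B C) : ∃ (φ : ℝ → ℝ) (T : ℝ), φ 0 = 0 ∧
    (∀ s, HasStrictDerivAt φ (clockRate (A s) (B s) (C s)) s) ∧ Tendsto φ atTop (𝓝 T) :=
  ⟨fun s => ∫ x in (0 : ℝ)..s, clockRate (A x) (B x) (C x), _, intervalIntegral.integral_same,
    h.continuous_clockRate.integral_hasStrictDerivAt 0,
    intervalIntegral_tendsto_integral_Ioi 0 h.integrableOn_clockRate tendsto_id⟩

theorem tendsto_sq_div_sub (h : IsRescaledSol A B C) {φ : ℝ → ℝ} {T : ℝ}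
    (hφ : ∀ s, HasDerivAt φ (clockRate (A s) (B s) (C s)) s) (hT : Tendsto φ atTop (𝓝 T)) :
    Tendsto (fun s => A s ^ 2 / (T - φ s)) atTop (𝓝 (2 ^ 2)) := by
  refine HasDerivAt.lhopital_zero_atTop (.of_forall fun s => (h.hasDerivAt_A s).fun_pow 2)
    (.of_forall fun s => (hφ s).const_sub T) (.of_forall fun s => ?_)
    (by simpa using h.tendsto_zero.pow 2) (by simpa using hT.const_sub T) ?_
  · exact neg_ne_zero.2 (clockRate_pos (h.A_pos s) (h.B_pos s) (h.C_pos s)).ne'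
  · have hlim := (h.tendsto_rescaledRate.const_mul (-2)).div h.tendsto_clockRate_div_sq
      (by norm_num)
    rw [show -2 * (-2 / 81) / (1 / 81) = (2 : ℝ) ^ 2 by norm_num] at hlim
    refine hlim.congr fun s => ?_
    have hA := (h.A_pos s).ne'
    have hw := (clockRate_pos (h.A_pos s) (h.B_pos s) (h.C_pos s)).ne'
    simp only [Pi.div_apply]
    push_cast
    field_simp

theorem isSolSU2_comp (h : IsRescaledSol A B C) {g : ℝ → ℝ} {I : Set ℝ}
    (hg : ∀ t ∈ I, HasDerivAt g (clockRate (A (g t)) (B (g t)) (C (g t)))⁻¹ t) :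
    IsSolSU2 (A ∘ g) (B ∘ g) (C ∘ g) I := by
  intro t ht
  have hA := h.A_pos (g t)
  have hB := h.B_pos (g t)
  have hC := h.C_pos (g t)
  refine ⟨⟨hA, hB, hC⟩, ((h.hasDerivAt_A _).comp t (hg t ht)).congr_deriv ?_,
    ((h.hasDerivAt_B _).comp t (hg t ht)).congr_deriv ?_,
    ((h.hasDerivAt_C _).comp t (hg t ht)).congr_deriv ?_⟩
  · simp only [rescaledRate, clockRate, Function.comp_apply]
    field_simp
  all_goals
    simp only [rescaledRate, clockRate, su2X, su2Y, su2Z, Function.comp_apply]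
    field_simp
    ring

end IsRescaledSol

-- An extension beyond `T` would be positive and continuous at `T`.
theorem isMaxSolSU2_of_tendsto_zero {A B C : ℝ → ℝ} {T : ℝ} (hT : 0 < T)
    (h : IsSolSU2 A B C {t : ℝ | 0 ≤ t ∧ (t : EReal) < T}) (hA : Tendsto A (𝓝[<] T) (𝓝 0)) :
    IsMaxSolSU2 A B C T := by
  refine ⟨h, fun A' B' C' T' hTT' h' heq => ?_⟩
  obtain ⟨⟨hpos, -, -⟩, hderiv, -, -⟩ := h' T ⟨hT.le, hTT'⟩
  have h_value : Tendsto A' (𝓝[<] T) (𝓝 (A' T)) :=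
    hderiv.continuousAt.tendsto.mono_left nhdsWithin_le_nhds
  have h_zero : Tendsto A' (𝓝[<] T) (𝓝 0) := by
    refine hA.congr' ?_
    filter_upwards [Ioo_mem_nhdsLT hT] with t ht
    exact (heq t ht.1.le (EReal.coe_lt_coe ht.2)).1.symm
  exact hpos.ne' (tendsto_nhds_unique h_value h_zero)

/-- For any initial data `A0, B0, C0 > 0`, the `SU(2)` negative cross curvature flow has
a maximal positive solution on a finite interval `[0, T0)`, and as `t → T0⁻` one has
`A, B, C ∼ 2√(T0 - t)`. -/
theorem su2_general_extinction
    (A0 B0 C0 : ℝ) (hA0 : 0 < A0) (hB0 : 0 < B0) (hC0 : 0 < C0) :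
    ∃ (T0 : ℝ) (A B C : ℝ → ℝ), 0 < T0 ∧
      A 0 = A0 ∧ B 0 = B0 ∧ C 0 = C0 ∧
      IsMaxSolSU2 A B C (T0 : EReal) ∧
      Filter.Tendsto (fun t => A t / (2 * Real.sqrt (T0 - t)))
        (nhdsWithin T0 (Set.Iio T0)) (nhds 1) ∧
      Filter.Tendsto (fun t => B t / (2 * Real.sqrt (T0 - t)))
        (nhdsWithin T0 (Set.Iio T0)) (nhds 1) ∧
      Filter.Tendsto (fun t => C t / (2 * Real.sqrt (T0 - t)))
        (nhdsWithin T0 (Set.Iio T0)) (nhds 1) := by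
  obtain ⟨A, B, C, rfl, rfl, rfl, h⟩ := exists_isRescaledSol hA0 hB0 hC0
  obtain ⟨φ, T, hφ0, hφ, hφT⟩ := h.exists_clock
  have hφ' (s : ℝ) := clockRate_pos (h.A_pos s) (h.B_pos s) (h.C_pos s)
  have hT : 0 < T := hφ0 ▸ lt_of_strictMono_of_tendsto_atTop
    (strictMono_of_hasDerivAt_pos (fun s => (hφ s).hasDerivAt) hφ') hφT 0
  obtain ⟨g, hgφ, hφg, hg, hg_top⟩ := exists_inverse_of_hasStrictDerivAt_pos hφ hφ' hφT
  have hφg' : RightInvOn g φ (Ico 0 T) := hφ0 ▸ hφg 0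
  have hg0 : g 0 = 0 := by simpa only [hφ0] using hgφ 0
  have hsol : IsSolSU2 (A ∘ g) (B ∘ g) (C ∘ g) {t : ℝ | 0 ≤ t ∧ (t : EReal) < T} :=
    h.isSolSU2_comp fun t ht => by
      simpa only [hφg' ⟨ht.1, EReal.coe_lt_coe_iff.1 ht.2⟩] using hg (g t)
  have hA : Tendsto (fun t => (A ∘ g) t / (2 * √(T - t))) (𝓝[<] T) (𝓝 1) := by
    refine tendsto_div_mul_sqrt_of_tendsto_sq_div two_pos (fun t => (h.A_pos _).le) <|
      ((h.tendsto_sq_div_sub (fun s => (hφ s).hasDerivAt) hφT).comp hg_top).congr' ?_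
    filter_upwards [Ico_mem_nhdsLT hT] with t ht
    simp only [Function.comp_apply, hφg' ht]
  have hAB := h.isEquivalent.1.comp_tendsto hg_top
  have hBC := h.isEquivalent.2.comp_tendsto hg_top
  have hB := (hAB.div .refl).tendsto_nhds hA
  exact ⟨T, A ∘ g, B ∘ g, C ∘ g, hT, congrArg A hg0, congrArg B hg0, congrArg C hg0,
    isMaxSolSU2_of_tendsto_zero hT hsol (h.tendsto_zero.comp hg_top),
    hA, hB, (hBC.div .refl).tendsto_nhds hB⟩
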